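/- Assume in addition that |x·g'(x)| ≤ C₂|g(x)| and |x·f'(x)| ≤ C₃ for all x ≤ −3/2, for some constants C₂, C₃ > 0. Then there exists a constant c > 0, uniform in λ ≥ 1, such that for every u in the Schwartz space 𝒮(ℝ, ℂ⁴): ‖Γ¹R₋'Du − (i/2)Γ¹R₋''u − λR₋g'Γ²u − R₋f'u‖ ≤ c(‖H₀u‖ + ‖u‖). (The operator on the left-hand side is the commutator i[H₀, A₋] computed on Schwartz functions, so i[H₀, A₋] extends uniquely to a bounded operator from D(H₀) to L²(ℝ, ℂ⁴).) -/

import Mathlib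

noncomputable section

open MeasureTheory

abbrev V4 : Type := EuclideanSpace ℂ (Fin 4)

/-- A `4 × 4` complex matrix acting on `ℂ⁴` as a continuous linear map. -/
def Mop (A : Matrix (Fin 4) (Fin 4) ℂ) : V4 →L[ℂ] V4 := Matrix.toEuclideanCLM (𝕜 := ℂ) A

/-- The `L²` inner product `⟨u, v⟩ = ∫ ⟨u(x), v(x)⟩ dx` (conjugate-linear in the first slot). -/
def L2inner (u v : ℝ → V4) : ℂ := ∫ x : ℝ, (inner ℂ (u x) (v x) : ℂ)

/-- The `L²` norm `‖u‖ = (∫ ‖u(x)‖² dx)^{1/2}`. -/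
def L2norm (u : ℝ → V4) : ℝ := Real.sqrt (∫ x : ℝ, ‖u x‖ ^ 2)

/-- The operator `D = −i d/dx`. -/
def Dop (u : ℝ → V4) : ℝ → V4 := fun x => (-Complex.I) • deriv u x

/-- The per-mode free Dirac Hamiltonian `H₀u = Γ¹Du + λgΓ²u + fu`. -/
def H0op (Γ1 Γ2 : Matrix (Fin 4) (Fin 4) ℂ) (g f : ℝ → ℝ) (lam : ℝ) (u : ℝ → V4) : ℝ → V4 :=
  fun x => Mop Γ1 (Dop u x) + (lam * g x) • Mop Γ2 (u x) + f x • u x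

/-- The operator `Qu = −u'' + λ²g²u`. -/
def Qop (g : ℝ → ℝ) (lam : ℝ) (u : ℝ → V4) : ℝ → V4 :=
  fun x => -(deriv (deriv u) x) + (lam ^ 2 * g x ^ 2) • u x

/-- The comparison operator `Nu = Qu + (1 + x²)u`. -/
def Nop (g : ℝ → ℝ) (lam : ℝ) (u : ℝ → V4) : ℝ → V4 :=
  fun x => Qop g lam u x + (1 + x ^ 2) • u x

/-- The coefficient `R₋(x) = j₋(x/S)² · x` of the conjugate operator at the double horizon. -/
def Rm (jm : ℝ → ℝ) (S : ℝ) (x : ℝ) : ℝ := (jm (x / S)) ^ 2 * x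

/-- The conjugate operator at the double horizon, `A₋u = R₋Du − (i/2)R₋'u = ½{R₋, D}u`. -/
def Amop (jm : ℝ → ℝ) (S : ℝ) (u : ℝ → V4) : ℝ → V4 :=
  fun x => Rm jm S x • Dop u x - ((Complex.I / 2) * ((deriv (Rm jm S) x : ℝ) : ℂ)) • u x

/-- The commutator `i[H₀, A₋] = Γ¹R₋'D − (i/2)Γ¹R₋'' − λR₋g'Γ² − R₋f'` computed on
Schwartz functions. -/
def iCommH0Am (Γ1 Γ2 : Matrix (Fin 4) (Fin 4) ℂ) (g f : ℝ → ℝ) (lam : ℝ)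
    (jm : ℝ → ℝ) (S : ℝ) (u : ℝ → V4) : ℝ → V4 :=
  fun x =>
    deriv (Rm jm S) x • Mop Γ1 (Dop u x)
      - ((Complex.I / 2) * ((deriv (deriv (Rm jm S)) x : ℝ) : ℂ)) • Mop Γ1 (u x)
      - (lam * Rm jm S x * deriv g x) • Mop Γ2 (u x)
      - (Rm jm S x * deriv f x) • u x

/-! The free part satisfies `(T₁D + mT₂)² = D² + m² - iT₁T₂m'`, so as a quadratic form it equals
`‖u'‖² + ‖mu‖²` up to a cross term that is integrated by parts onto `m'`. Since `|m'| ≤ C|m|`, that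
term is absorbed into `½‖mu‖²` at the price of a multiple of `‖u‖²`; hence the graph norm of the
Hamiltonian controls `‖u'‖` and `‖mu‖`. The commutator is pointwise dominated by `|u'|`, `|mu|` and
`|u|`. Applied to `m = λg`, all hypotheses on `m` are homogeneous in `λ`, which is why the constant
is uniform. -/

lemma sqrt_le_sqrt_mul_sqrt_add_sqrt {κ p q r : ℝ} (hp : 0 ≤ p) (hq : 0 ≤ q)
    (hr : r ≤ κ * (p + q)) : √r ≤ √κ * (√p + √q) := by
  have hadd : √(p + q) ≤ √p + √q :=
    Real.sqrt_le_iff.mpr ⟨by positivity, by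
      nlinarith [Real.sq_sqrt hp, Real.sq_sqrt hq, Real.sqrt_nonneg p, Real.sqrt_nonneg q]⟩
  calc √r ≤ √(κ * (p + q)) := Real.sqrt_le_sqrt hr
    _ = √κ * √(p + q) := Real.sqrt_mul' κ (add_nonneg hp hq)
    _ ≤ √κ * (√p + √q) := by gcongr

lemma exists_norm_le_of_eqOn_const {X E : Type*} [LinearOrder X] [TopologicalSpace X]
    [CompactIccSpace X] [NormedAddCommGroup E] {φ : X → E} {a b : X} {p q : E}
    (hφ : Continuous φ) (hl : Set.EqOn φ (fun _ => p) (Set.Iio a))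
    (hr : Set.EqOn φ (fun _ => q) (Set.Ioi b)) : ∃ K, ∀ x, ‖φ x‖ ≤ K := by
  obtain ⟨K, hK⟩ := isCompact_Icc.exists_bound_of_continuousOn (s := Set.Icc a b) hφ.continuousOn
  refine ⟨max K (max ‖p‖ ‖q‖), fun x => ?_⟩
  rcases lt_or_ge x a with hxa | hxa
  · simp [hl hxa]
  rcases lt_or_ge b x with hxb | hxb
  · simp [hr hxb]
  · exact le_max_of_le_left (hK x ⟨hxa, hxb⟩)

lemma norm_map_of_isSymmetric_of_mul_self {𝕜 E : Type*} [RCLike 𝕜] [SeminormedAddCommGroup E]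
    [InnerProductSpace 𝕜 E] {T : E →L[𝕜] E} (hT : (T : E →ₗ[𝕜] E).IsSymmetric) (hsq : T * T = 1)
    (v : E) : ‖T v‖ = ‖v‖ := by
  have hinner : inner 𝕜 (T v) (T v) = inner 𝕜 v v :=
    (hT v (T v)).trans (congrArg (inner 𝕜 v) (DFunLike.congr_fun hsq v))
  rw [norm_eq_sqrt_re_inner (𝕜 := 𝕜), hinner, ← norm_eq_sqrt_re_inner]

section Lp

variable {α E : Type*} {mα : MeasurableSpace α} {μ : Measure α} [NormedAddCommGroup E]

lemma memLp_smul_of_abs_le [NormedSpace ℝ E] {p : ENNReal} {s t : α → ℝ} {u : α → E} {C : ℝ}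
    (hs : AEStronglyMeasurable s μ) (hst : ∀ x, |s x| ≤ C * |t x|)
    (hu : AEStronglyMeasurable u μ) (htu : MemLp (fun x => t x • u x) p μ) :
    MemLp (fun x => s x • u x) p μ := by
  refine htu.of_le_mul (c := C) (hs.smul hu) (.of_forall fun x => ?_)
  rw [norm_smul, norm_smul, ← mul_assoc]
  exact mul_le_mul_of_nonneg_right (hst x) (norm_nonneg _)

lemma integral_norm_sq_le_of_norm_le_add {v₁ v₂ v₃ w : α → E} {a b c : ℝ}
    (hv₁ : MemLp v₁ 2 μ) (hv₂ : MemLp v₂ 2 μ) (hv₃ : MemLp v₃ 2 μ)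
    (hw : ∀ x, ‖w x‖ ≤ a * ‖v₁ x‖ + b * ‖v₂ x‖ + c * ‖v₃ x‖) :
    ∫ x, ‖w x‖ ^ 2 ∂μ ≤ 3 * a ^ 2 * (∫ x, ‖v₁ x‖ ^ 2 ∂μ) + 3 * b ^ 2 * (∫ x, ‖v₂ x‖ ^ 2 ∂μ) +
      3 * c ^ 2 * ∫ x, ‖v₃ x‖ ^ 2 ∂μ := by
  have hint₁ := (hv₁.integrable_norm_pow two_ne_zero).const_mul (3 * a ^ 2)
  have hint₂ := (hv₂.integrable_norm_pow two_ne_zero).const_mul (3 * b ^ 2)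
  have hint₃ := (hv₃.integrable_norm_pow two_ne_zero).const_mul (3 * c ^ 2)
  simp only [← integral_const_mul]
  rw [← integral_add hint₁ hint₂, ← integral_add (hint₁.fun_add hint₂) hint₃]
  refine integral_mono_of_nonneg (.of_forall fun x => by positivity)
    ((hint₁.fun_add hint₂).fun_add hint₃) (.of_forall fun x => ?_)
  linarith [pow_le_pow_left₀ (norm_nonneg _) (hw x) 2, sq_nonneg (a * ‖v₁ x‖ - b * ‖v₂ x‖),
    sq_nonneg (a * ‖v₁ x‖ - c * ‖v₃ x‖), sq_nonneg (b * ‖v₂ x‖ - c * ‖v₃ x‖)]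

end Lp

section Dirac

variable {V : Type*} [NormedAddCommGroup V] [InnerProductSpace ℂ V]

/-- Two anticommuting symmetric involutions, i.e. generators of a Clifford algebra acting on `V`;
they play the role of the Dirac matrices `Γ¹`, `Γ²`. -/
structure IsCliffordPair (T₁ T₂ : V →L[ℂ] V) : Prop where
  isSymmetric_left : (T₁ : V →ₗ[ℂ] V).IsSymmetric
  isSymmetric_right : (T₂ : V →ₗ[ℂ] V).IsSymmetric
  mul_self_left : T₁ * T₁ = 1
  mul_self_right : T₂ * T₂ = 1
  anticomm : T₁ * T₂ + T₂ * T₁ = 0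

/-- The free Dirac operator `T₁D + mT₂` with `D = -i d/dx` and mass function `m`. -/
def freeDiracOp (T₁ T₂ : V →L[ℂ] V) (m : ℝ → ℝ) (u : ℝ → V) : ℝ → V :=
  fun x => T₁ ((-Complex.I) • deriv u x) + m x • T₂ (u x)

/-- The Dirac operator `T₁D + mT₂ + f` with scalar potential `f`; for `m = λg` this is `H₀`. -/
def diracOp (T₁ T₂ : V →L[ℂ] V) (m f : ℝ → ℝ) (u : ℝ → V) : ℝ → V :=
  fun x => freeDiracOp T₁ T₂ m u x + f x • u x

/-- The commutator `i[H, A]` of `H = T₁D + λgT₂ + f` with `A = RD - (i/2)R'`, in the expanded form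
`T₁R'D - (i/2)T₁R'' - λRg'T₂ - Rf'`. -/
def diracCommutator (T₁ T₂ : V →L[ℂ] V) (g f : ℝ → ℝ) (lam : ℝ) (R : ℝ → ℝ) (u : ℝ → V) : ℝ → V :=
  fun x =>
    deriv R x • T₁ ((-Complex.I) • deriv u x)
      - ((Complex.I / 2) * ((deriv (deriv R) x : ℝ) : ℂ)) • T₁ (u x)
      - (lam * R x * deriv g x) • T₂ (u x)
      - (R x * deriv f x) • u x

/-- The real bilinear form `Re ⟨T₁(-iv), T₂w⟩`, whose value at `(u', u)` is the cross term in
`‖T₁Du + T₂u‖²`. -/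
def diracCross (T₁ T₂ : V →L[ℂ] V) (v w : V) : ℝ :=
  (inner ℂ (T₁ ((-Complex.I) • v)) (T₂ w) : ℂ).re

variable {T₁ T₂ : V →L[ℂ] V}

lemma diracCross_smul_right (t : ℝ) (v w : V) :
    diracCross T₁ T₂ v (t • w) = t * diracCross T₁ T₂ v w := by
  simp [diracCross, ← Complex.coe_smul]

namespace IsCliffordPair

lemma norm_map_left (hT : IsCliffordPair T₁ T₂) (v : V) : ‖T₁ v‖ = ‖v‖ :=
  norm_map_of_isSymmetric_of_mul_self hT.isSymmetric_left hT.mul_self_left v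

lemma norm_map_right (hT : IsCliffordPair T₁ T₂) (v : V) : ‖T₂ v‖ = ‖v‖ :=
  norm_map_of_isSymmetric_of_mul_self hT.isSymmetric_right hT.mul_self_right v

lemma norm_map_left_neg_I_smul (hT : IsCliffordPair T₁ T₂) (v : V) :
    ‖T₁ ((-Complex.I) • v)‖ = ‖v‖ := by
  simp [hT.norm_map_left, norm_smul]

lemma diracCross_comm (hT : IsCliffordPair T₁ T₂) (v w : V) :
    diracCross T₁ T₂ v w = diracCross T₁ T₂ w v := by
  have hanti (y : V) : T₂ (T₁ y) = -T₁ (T₂ y) :=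
    eq_neg_of_add_eq_zero_right (DFunLike.congr_fun hT.anticomm y)
  have hswap : inner ℂ (T₁ v) (T₂ w) = -inner ℂ (T₂ v) (T₁ w) := by
    have h₁ : inner ℂ (T₁ v) (T₂ w) = inner ℂ v (T₁ (T₂ w)) := hT.isSymmetric_left v (T₂ w)
    have h₂ : inner ℂ (T₂ v) (T₁ w) = inner ℂ v (T₂ (T₁ w)) := hT.isSymmetric_right v (T₁ w)
    rw [h₁, h₂, hanti, inner_neg_right, neg_neg]
  have hconj : (inner ℂ (T₁ w) (T₂ v)).im = -(inner ℂ (T₂ v) (T₁ w)).im := by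
    rw [← inner_conj_symm, Complex.conj_im]
  simp [diracCross, inner_smul_left, hswap, hconj]

lemma abs_diracCross_le (hT : IsCliffordPair T₁ T₂) (v w : V) :
    |diracCross T₁ T₂ v w| ≤ ‖v‖ * ‖w‖ :=
  calc |diracCross T₁ T₂ v w|
      ≤ ‖(inner ℂ (T₁ ((-Complex.I) • v)) (T₂ w) : ℂ)‖ := Complex.abs_re_le_norm _
    _ ≤ ‖T₁ ((-Complex.I) • v)‖ * ‖T₂ w‖ := norm_inner_le_norm _ _
    _ = ‖v‖ * ‖w‖ := by rw [hT.norm_map_left_neg_I_smul, hT.norm_map_right]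

lemma hasDerivAt_diracCross_self (hT : IsCliffordPair T₁ T₂) {u : ℝ → V} {u' : V} {x : ℝ}
    (hu : HasDerivAt u u' x) :
    HasDerivAt (fun y => diracCross T₁ T₂ (u y) (u y)) (2 * diracCross T₁ T₂ u' (u x)) x := by
  have h₁ : HasDerivAt (fun y => T₁ ((-Complex.I) • u y)) (T₁ ((-Complex.I) • u')) x :=
    (T₁.restrictScalars ℝ).hasFDerivAt.comp_hasDerivAt x (hu.const_smul (-Complex.I))
  have h₂ : HasDerivAt (fun y => T₂ (u y)) (T₂ u') x :=
    (T₂.restrictScalars ℝ).hasFDerivAt.comp_hasDerivAt x hu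
  rw [two_mul]
  nth_rw 1 [hT.diracCross_comm]
  exact Complex.reCLM.hasFDerivAt.comp_hasDerivAt x (h₁.inner ℂ h₂)

lemma norm_sq_freeDiracOp (hT : IsCliffordPair T₁ T₂) (m : ℝ → ℝ) (u : ℝ → V) (x : ℝ) :
    ‖freeDiracOp T₁ T₂ m u x‖ ^ 2 =
      ‖deriv u x‖ ^ 2 + ‖m x • u x‖ ^ 2 + 2 * diracCross T₁ T₂ (deriv u x) (m x • u x) := by
  have hT₂ : m x • T₂ (u x) = T₂ (m x • u x) := (T₂.map_smul_of_tower _ _).symm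
  rw [freeDiracOp, hT₂, norm_add_sq (𝕜 := ℂ), hT.norm_map_left_neg_I_smul, hT.norm_map_right,
    diracCross, RCLike.re_eq_complex_re]
  ring

variable {m : ℝ → ℝ} {u : ℝ → V}

lemma integrable_diracCross (hT : IsCliffordPair T₁ T₂) {v w : ℝ → V}
    (hv : MemLp v 2) (hw : MemLp w 2) : Integrable fun x => diracCross T₁ T₂ (v x) (w x) := by
  have hmeas : AEStronglyMeasurable (fun x => diracCross T₁ T₂ (v x) (w x)) :=
    Complex.continuous_re.comp_aestronglyMeasurable <|
      (T₁.continuous.comp_aestronglyMeasurable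
        (hv.aestronglyMeasurable.const_smul (-Complex.I))).inner
        (T₂.continuous.comp_aestronglyMeasurable hw.aestronglyMeasurable)
  exact (hv.norm.integrable_mul hw.norm).mono' hmeas (.of_forall fun x => hT.abs_diracCross_le _ _)

lemma integral_two_mul_diracCross_deriv (hT : IsCliffordPair T₁ T₂) (hm : Differentiable ℝ m)
    (hu : Differentiable ℝ u) (hu₂ : MemLp u 2) (hu' : MemLp (deriv u) 2)
    (hmu : MemLp (fun x => m x • u x) 2) (hm'u : MemLp (fun x => deriv m x • u x) 2) :
    ∫ x, 2 * diracCross T₁ T₂ (deriv u x) (m x • u x) =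
      -∫ x, diracCross T₁ T₂ (u x) (deriv m x • u x) := by
  have hderiv (x : ℝ) : HasDerivAt (fun y => diracCross T₁ T₂ (u y) (m y • u y))
      (diracCross T₁ T₂ (u x) (deriv m x • u x) +
        2 * diracCross T₁ T₂ (deriv u x) (m x • u x)) x := by
    simp only [diracCross_smul_right]
    rw [mul_left_comm]
    exact (hm x).hasDerivAt.mul (hT.hasDerivAt_diracCross_self (hu x).hasDerivAt)
  have hint₁ := hT.integrable_diracCross hu₂ hm'u
  have hint₂ := (hT.integrable_diracCross hu' hmu).const_mul 2
  have hzero := integral_eq_zero_of_hasDerivAt_of_integrable hderiv (hint₁.add hint₂)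
    (hT.integrable_diracCross hu₂ hmu)
  rw [integral_add hint₁ hint₂] at hzero
  linarith

lemma integral_norm_sq_freeDiracOp (hT : IsCliffordPair T₁ T₂) (hm : Differentiable ℝ m)
    (hu : Differentiable ℝ u) (hu₂ : MemLp u 2) (hu' : MemLp (deriv u) 2)
    (hmu : MemLp (fun x => m x • u x) 2) (hm'u : MemLp (fun x => deriv m x • u x) 2) :
    ∫ x, ‖freeDiracOp T₁ T₂ m u x‖ ^ 2 =
      (∫ x, ‖deriv u x‖ ^ 2) + (∫ x, ‖m x • u x‖ ^ 2) -
        ∫ x, diracCross T₁ T₂ (u x) (deriv m x • u x) := by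
  have hint := hu'.integrable_norm_pow two_ne_zero
  have hint_m := hmu.integrable_norm_pow two_ne_zero
  simp_rw [hT.norm_sq_freeDiracOp]
  rw [integral_add (hint.fun_add hint_m) ((hT.integrable_diracCross hu' hmu).const_mul 2),
    integral_add hint hint_m, hT.integral_two_mul_diracCross_deriv hm hu hu₂ hu' hmu hm'u,
    sub_eq_add_neg]

end IsCliffordPair

section Estimates

variable {m f : ℝ → ℝ} {u : ℝ → V} {C M : ℝ} {p : ENNReal}

lemma memLp_freeDiracOp (hu' : MemLp (deriv u) p) (hmu : MemLp (fun x => m x • u x) p) :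
    MemLp (freeDiracOp T₁ T₂ m u) p := by
  have hT₂ : MemLp (fun x => m x • T₂ (u x)) p := by
    simp_rw [← T₂.map_smul_of_tower]
    exact T₂.comp_memLp' hmu
  exact (T₁.comp_memLp' (hu'.const_smul (-Complex.I))).add hT₂

lemma memLp_diracOp (hf : Continuous f) (hfM : ∀ x, |f x| ≤ M) (hu : MemLp u p)
    (hu' : MemLp (deriv u) p) (hmu : MemLp (fun x => m x • u x) p) :
    MemLp (diracOp T₁ T₂ m f u) p := by
  have hfu : MemLp (fun x => f x • u x) p :=
    MemLp.smul (𝕜 := ℝ) (φ := f) hu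
      (memLp_top_of_bound hf.aestronglyMeasurable M (.of_forall hfM))
  exact (memLp_freeDiracOp hu' hmu).add hfu

lemma norm_sq_freeDiracOp_le {x : ℝ} (hfM : |f x| ≤ M) :
    ‖freeDiracOp T₁ T₂ m u x‖ ^ 2 ≤
      2 * ‖diracOp T₁ T₂ m f u x‖ ^ 2 + 2 * M ^ 2 * ‖u x‖ ^ 2 := by
  have hle : ‖freeDiracOp T₁ T₂ m u x‖ ≤ ‖diracOp T₁ T₂ m f u x‖ + M * ‖u x‖ :=
    calc ‖freeDiracOp T₁ T₂ m u x‖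
        = ‖diracOp T₁ T₂ m f u x - f x • u x‖ := by rw [diracOp, add_sub_cancel_right]
      _ ≤ ‖diracOp T₁ T₂ m f u x‖ + |f x| * ‖u x‖ := by
          simpa only [norm_smul, Real.norm_eq_abs] using
            norm_sub_le (diracOp T₁ T₂ m f u x) (f x • u x)
      _ ≤ ‖diracOp T₁ T₂ m f u x‖ + M * ‖u x‖ := by gcongr
  linarith [pow_le_pow_left₀ (norm_nonneg _) hle 2,
    sq_nonneg (‖diracOp T₁ T₂ m f u x‖ - M * ‖u x‖)]

lemma IsCliffordPair.diracCross_smul_le (hT : IsCliffordPair T₁ T₂) {s t : ℝ}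
    (hst : |s| ≤ C * |t|) (v : V) :
    diracCross T₁ T₂ v (s • v) ≤ 1 / 2 * ‖t • v‖ ^ 2 + C ^ 2 / 2 * ‖v‖ ^ 2 := by
  have hle : diracCross T₁ T₂ v (s • v) ≤ ‖t • v‖ * (C * ‖v‖) :=
    calc diracCross T₁ T₂ v (s • v)
        ≤ ‖v‖ * ‖s • v‖ := (le_abs_self _).trans (hT.abs_diracCross_le _ _)
      _ = |s| * ‖v‖ * ‖v‖ := by rw [norm_smul, Real.norm_eq_abs]; ring
      _ ≤ C * |t| * ‖v‖ * ‖v‖ := by gcongr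
      _ = ‖t • v‖ * (C * ‖v‖) := by rw [norm_smul, Real.norm_eq_abs]; ring
  linarith [sq_nonneg (‖t • v‖ - C * ‖v‖)]

lemma integral_norm_sq_deriv_add_le (hT : IsCliffordPair T₁ T₂) (hm : Differentiable ℝ m)
    (hm' : ∀ x, |deriv m x| ≤ C * |m x|) (hf : Continuous f) (hfM : ∀ x, |f x| ≤ M)
    (hu : Differentiable ℝ u) (hu₂ : MemLp u 2) (hu' : MemLp (deriv u) 2)
    (hmu : MemLp (fun x => m x • u x) 2) :
    (∫ x, ‖deriv u x‖ ^ 2) + 1 / 2 * ∫ x, ‖m x • u x‖ ^ 2 ≤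
      2 * (∫ x, ‖diracOp T₁ T₂ m f u x‖ ^ 2) + (2 * M ^ 2 + C ^ 2 / 2) * ∫ x, ‖u x‖ ^ 2 := by
  have hm'u := memLp_smul_of_abs_le (measurable_deriv m).aestronglyMeasurable hm'
    hu₂.aestronglyMeasurable hmu
  have hint := hu₂.integrable_norm_pow two_ne_zero
  have hint_m := hmu.integrable_norm_pow two_ne_zero
  have hint_H := (memLp_diracOp (T₁ := T₁) (T₂ := T₂) hf hfM hu₂ hu' hmu).integrable_norm_pow
    two_ne_zero
  have hfree : ∫ x, ‖freeDiracOp T₁ T₂ m u x‖ ^ 2 ≤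
      2 * (∫ x, ‖diracOp T₁ T₂ m f u x‖ ^ 2) + 2 * M ^ 2 * ∫ x, ‖u x‖ ^ 2 := by
    rw [← integral_const_mul, ← integral_const_mul,
      ← integral_add (hint_H.const_mul 2) (hint.const_mul _)]
    exact integral_mono ((memLp_freeDiracOp hu' hmu).integrable_norm_pow two_ne_zero)
      ((hint_H.const_mul 2).add (hint.const_mul _)) fun x => norm_sq_freeDiracOp_le (hfM x)
  have hcross : ∫ x, diracCross T₁ T₂ (u x) (deriv m x • u x) ≤
      1 / 2 * (∫ x, ‖m x • u x‖ ^ 2) + C ^ 2 / 2 * ∫ x, ‖u x‖ ^ 2 := by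
    rw [← integral_const_mul, ← integral_const_mul,
      ← integral_add (hint_m.const_mul _) (hint.const_mul _)]
    exact integral_mono (hT.integrable_diracCross hu₂ hm'u)
      ((hint_m.const_mul _).add (hint.const_mul _)) fun x => hT.diracCross_smul_le (hm' x) (u x)
  linarith [hT.integral_norm_sq_freeDiracOp hm hu hu₂ hu' hmu hm'u]

lemma integral_norm_sq_le_graph_norm {w : ℝ → V} {a b c : ℝ} (hT : IsCliffordPair T₁ T₂)
    (hm : Differentiable ℝ m) (hm' : ∀ x, |deriv m x| ≤ C * |m x|) (hf : Continuous f)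
    (hfM : ∀ x, |f x| ≤ M) (hu : Differentiable ℝ u) (hu₂ : MemLp u 2) (hu' : MemLp (deriv u) 2)
    (hmu : MemLp (fun x => m x • u x) 2)
    (hw : ∀ x, ‖w x‖ ≤ a * ‖deriv u x‖ + b * ‖m x • u x‖ + c * ‖u x‖) :
    ∫ x, ‖w x‖ ^ 2 ≤ ((3 * a ^ 2 + 6 * b ^ 2) * (2 + 2 * M ^ 2 + C ^ 2 / 2) + 3 * c ^ 2) *
      ((∫ x, ‖diracOp T₁ T₂ m f u x‖ ^ 2) + ∫ x, ‖u x‖ ^ 2) := by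
  have hdom := integral_norm_sq_le_of_norm_le_add hu' hmu hu₂ hw
  have hgraph := integral_norm_sq_deriv_add_le hT hm hm' hf hfM hu hu₂ hu' hmu
  have hH₀ : 0 ≤ ∫ x, ‖diracOp T₁ T₂ m f u x‖ ^ 2 := by positivity
  have hu₀ : 0 ≤ ∫ x, ‖u x‖ ^ 2 := by positivity
  have hu'₀ : 0 ≤ ∫ x, ‖deriv u x‖ ^ 2 := by positivity
  have hmu₀ : 0 ≤ ∫ x, ‖m x • u x‖ ^ 2 := by positivity
  generalize (∫ x, ‖diracOp T₁ T₂ m f u x‖ ^ 2) = H at *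
  generalize (∫ x, ‖u x‖ ^ 2) = U at *
  generalize (∫ x, ‖deriv u x‖ ^ 2) = U' at *
  generalize (∫ x, ‖m x • u x‖ ^ 2) = Um at *
  calc ∫ x, ‖w x‖ ^ 2
      ≤ 3 * a ^ 2 * U' + 3 * b ^ 2 * Um + 3 * c ^ 2 * U := hdom
    _ ≤ (3 * a ^ 2 + 6 * b ^ 2) * (U' + 1 / 2 * Um) + 3 * c ^ 2 * U := by
        linarith [mul_nonneg (sq_nonneg b) hu'₀, mul_nonneg (sq_nonneg a) hmu₀]
    _ ≤ (3 * a ^ 2 + 6 * b ^ 2) * (2 * H + (2 * M ^ 2 + C ^ 2 / 2) * U) + 3 * c ^ 2 * U := by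
        gcongr
    _ ≤ (3 * a ^ 2 + 6 * b ^ 2) * ((2 + 2 * M ^ 2 + C ^ 2 / 2) * (H + U)) +
          3 * c ^ 2 * (H + U) := by
        gcongr
        · linarith [mul_nonneg (by positivity : 0 ≤ 2 * M ^ 2 + C ^ 2 / 2) hH₀]
        · linarith
    _ = _ := by ring

end Estimates

section Commutator

variable {g f R : ℝ → ℝ} {lam K₁ K₂ C₂ C₃ : ℝ} {u : ℝ → V}

lemma norm_diracCommutator_le (hT : IsCliffordPair T₁ T₂) {x : ℝ} (hR' : |deriv R x| ≤ K₁)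
    (hR'' : |deriv (deriv R) x| ≤ K₂) (hRg' : |R x * deriv g x| ≤ C₂ * |g x|)
    (hRf' : |R x * deriv f x| ≤ C₃) :
    ‖diracCommutator T₁ T₂ g f lam R u x‖ ≤
      K₁ * ‖deriv u x‖ + C₂ * ‖(lam * g x) • u x‖ + (K₂ / 2 + C₃) * ‖u x‖ := by
  have hterm₁ : ‖deriv R x • T₁ ((-Complex.I) • deriv u x)‖ ≤ K₁ * ‖deriv u x‖ := by
    rw [norm_smul, hT.norm_map_left_neg_I_smul, Real.norm_eq_abs]
    gcongr
  have hterm₂ : ‖((Complex.I / 2) * ((deriv (deriv R) x : ℝ) : ℂ)) • T₁ (u x)‖ ≤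
      K₂ / 2 * ‖u x‖ := by
    rw [norm_smul, hT.norm_map_left, norm_mul, norm_div, Complex.norm_I, Complex.norm_real,
      Complex.norm_ofNat, Real.norm_eq_abs, one_div_mul_eq_div]
    gcongr
  have hterm₃ : ‖(lam * R x * deriv g x) • T₂ (u x)‖ ≤ C₂ * ‖(lam * g x) • u x‖ :=
    calc ‖(lam * R x * deriv g x) • T₂ (u x)‖
        = |lam| * |R x * deriv g x| * ‖u x‖ := by
          rw [norm_smul, hT.norm_map_right, Real.norm_eq_abs, mul_assoc, abs_mul]
      _ ≤ |lam| * (C₂ * |g x|) * ‖u x‖ := by gcongr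
      _ = C₂ * ‖(lam * g x) • u x‖ := by rw [norm_smul, Real.norm_eq_abs, abs_mul]; ring
  have hterm₄ : ‖(R x * deriv f x) • u x‖ ≤ C₃ * ‖u x‖ := by
    rw [norm_smul, Real.norm_eq_abs]
    gcongr
  rw [diracCommutator]
  refine (norm_sub_le_of_le (norm_sub_le_of_le (norm_sub_le_of_le hterm₁ hterm₂) hterm₃)
    hterm₄).trans_eq ?_
  ring

lemma aestronglyMeasurable_diracCommutator (hR : ContDiff ℝ 2 R)
    (hu : AEStronglyMeasurable u) (hu' : AEStronglyMeasurable (deriv u)) :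
    AEStronglyMeasurable (diracCommutator T₁ T₂ g f lam R u) := by
  have hR' : Continuous (deriv R) := hR.continuous_deriv one_le_two
  have hR'' : Continuous fun x => (Complex.I / 2) * ((deriv (deriv R) x : ℝ) : ℂ) :=
    continuous_const.mul (Complex.continuous_ofReal.comp
      (hR.deriv'.continuous_deriv le_rfl))
  have hRg' : Measurable fun x => lam * R x * deriv g x :=
    (hR.continuous.measurable.const_mul lam).mul (measurable_deriv g)
  have hRf' : Measurable fun x => R x * deriv f x :=
    hR.continuous.measurable.mul (measurable_deriv f)
  have hT₁u' := T₁.continuous.comp_aestronglyMeasurable (hu'.const_smul (-Complex.I))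
  have hT₁u := T₁.continuous.comp_aestronglyMeasurable hu
  have hT₂u := T₂.continuous.comp_aestronglyMeasurable hu
  exact (((hR'.aestronglyMeasurable.smul hT₁u').sub (hR''.aestronglyMeasurable.smul hT₁u)).sub
    (hRg'.aestronglyMeasurable.smul hT₂u)).sub (hRf'.aestronglyMeasurable.smul hu)

lemma memLp_diracCommutator (hT : IsCliffordPair T₁ T₂) (hR : ContDiff ℝ 2 R)
    (hR' : ∀ x, |deriv R x| ≤ K₁) (hR'' : ∀ x, |deriv (deriv R) x| ≤ K₂)
    (hRg' : ∀ x, |R x * deriv g x| ≤ C₂ * |g x|) (hRf' : ∀ x, |R x * deriv f x| ≤ C₃)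
    (hu₂ : MemLp u 2) (hu' : MemLp (deriv u) 2) (hgu : MemLp (fun x => (lam * g x) • u x) 2) :
    MemLp (diracCommutator T₁ T₂ g f lam R u) 2 :=
  (((hu'.norm.const_mul K₁).add (hgu.norm.const_mul C₂)).add
    (hu₂.norm.const_mul (K₂ / 2 + C₃))).mono'
    (aestronglyMeasurable_diracCommutator hR hu₂.aestronglyMeasurable hu'.aestronglyMeasurable)
    (.of_forall fun x => norm_diracCommutator_le hT (hR' x) (hR'' x) (hRg' x) (hRf' x))

theorem commutator_H0_Aminus_bounded_general (hT : IsCliffordPair T₁ T₂) {Cg Mf : ℝ}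
    (hg : Differentiable ℝ g) (hg' : ∀ x, |deriv g x| ≤ Cg * |g x|)
    (hf : Differentiable ℝ f) (hf_bdd : ∀ x, |f x| ≤ Mf)
    (hR : ContDiff ℝ 2 R) (hR' : ∃ K, ∀ x, |deriv R x| ≤ K)
    (hR'' : ∃ K, ∀ x, |deriv (deriv R) x| ≤ K)
    (hRg' : ∀ x, |R x * deriv g x| ≤ C₂ * |g x|) (hRf' : ∀ x, |R x * deriv f x| ≤ C₃) :
    ∃ c : ℝ, 0 < c ∧ ∀ (lam : ℝ) (u : ℝ → V), Differentiable ℝ u → MemLp u 2 →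
      MemLp (deriv u) 2 → MemLp (fun x => g x • u x) 2 →
      MemLp (diracCommutator T₁ T₂ g f lam R u) 2 ∧
        √(∫ x, ‖diracCommutator T₁ T₂ g f lam R u x‖ ^ 2) ≤
          c * (√(∫ x, ‖diracOp T₁ T₂ (fun y => lam * g y) f u x‖ ^ 2) + √(∫ x, ‖u x‖ ^ 2)) := by
  obtain ⟨K₁, hK₁⟩ := hR'
  obtain ⟨K₂, hK₂⟩ := hR''
  refine ⟨√((3 * K₁ ^ 2 + 6 * C₂ ^ 2) * (2 + 2 * Mf ^ 2 + Cg ^ 2 / 2) + 3 * (K₂ / 2 + C₃) ^ 2) + 1,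
    by positivity, fun lam u hu hu₂ hu' hgu => ?_⟩
  have hmu : MemLp (fun x => (lam * g x) • u x) 2 := by
    simp_rw [mul_smul]
    exact hgu.const_smul lam
  have hm' (x : ℝ) : |deriv (fun y => lam * g y) x| ≤ Cg * |lam * g x| := by
    rw [deriv_const_mul_field, abs_mul, abs_mul, mul_left_comm]
    exact mul_le_mul_of_nonneg_left (hg' x) (abs_nonneg lam)
  refine ⟨memLp_diracCommutator hT hR hK₁ hK₂ hRg' hRf' hu₂ hu' hmu, ?_⟩
  have hgraph := integral_norm_sq_le_graph_norm hT (hg.const_mul lam) hm' hf.continuous hf_bdd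
    hu hu₂ hu' hmu fun x => norm_diracCommutator_le hT (hK₁ x) (hK₂ x) (hRg' x) (hRf' x)
  refine (sqrt_le_sqrt_mul_sqrt_add_sqrt (by positivity) (by positivity) hgraph).trans ?_
  gcongr
  exact (lt_add_one _).le

end Commutator

end Dirac

section Mop

variable {A B : Matrix (Fin 4) (Fin 4) ℂ}

lemma isSymmetric_Mop (hA : A.IsHermitian) : (Mop A : V4 →ₗ[ℂ] V4).IsSymmetric :=
  Matrix.isSymmetric_toEuclideanLin_iff.mpr hA

lemma isCliffordPair_Mop (hA : A.IsHermitian) (hB : B.IsHermitian) (hA_sq : A * A = 1)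
    (hB_sq : B * B = 1) (hAB : A * B + B * A = 0) : IsCliffordPair (Mop A) (Mop B) where
  isSymmetric_left := isSymmetric_Mop hA
  isSymmetric_right := isSymmetric_Mop hB
  mul_self_left := by rw [Mop, ← map_mul, hA_sq, map_one]
  mul_self_right := by rw [Mop, ← map_mul, hB_sq, map_one]
  anticomm := by rw [Mop, Mop, ← map_mul, ← map_mul, ← map_add, hAB, map_zero]

end Mop

section Rm

variable {j : ℝ → ℝ} {S : ℝ}

lemma contDiff_Rm {n : WithTop ℕ∞} (hj : ContDiff ℝ n j) : ContDiff ℝ n (Rm j S) :=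
  ((hj.comp (contDiff_id.div_const S)).pow 2).mul contDiff_id

lemma Rm_eqOn_id {t : ℝ} (hS : 0 < S) (hj : ∀ s ≤ t, j s = 1) :
    Set.EqOn (Rm j S) id (Set.Iio (t * S)) := fun x hx => by
  simp [Rm, hj (x / S) ((div_le_iff₀ hS).mpr (le_of_lt hx))]

lemma Rm_eqOn_zero {t : ℝ} (hS : 0 < S) (hj : ∀ s, t ≤ s → j s = 0) :
    Set.EqOn (Rm j S) (fun _ => 0) (Set.Ioi (t * S)) := fun x hx => by
  simp [Rm, hj (x / S) ((le_div_iff₀ hS).mpr (le_of_lt hx))]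

lemma deriv_Rm_eqOn_one {t : ℝ} (hS : 0 < S) (hj : ∀ s ≤ t, j s = 1) :
    Set.EqOn (deriv (Rm j S)) (fun _ => 1) (Set.Iio (t * S)) := by
  simpa using! (Rm_eqOn_id hS hj).deriv isOpen_Iio

lemma deriv_Rm_eqOn_zero {t : ℝ} (hS : 0 < S) (hj : ∀ s, t ≤ s → j s = 0) :
    Set.EqOn (deriv (Rm j S)) (fun _ => 0) (Set.Ioi (t * S)) := by
  simpa using (Rm_eqOn_zero hS hj).deriv isOpen_Ioi

variable {a b : ℝ}

lemma exists_abs_deriv_Rm_le (hS : 0 < S) (hj : ContDiff ℝ 1 j)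
    (hj_one : ∀ t ≤ a, j t = 1) (hj_zero : ∀ t, b ≤ t → j t = 0) :
    ∃ K, ∀ x, |deriv (Rm j S) x| ≤ K :=
  exists_norm_le_of_eqOn_const ((contDiff_Rm hj).continuous_deriv le_rfl)
    (deriv_Rm_eqOn_one hS hj_one) (deriv_Rm_eqOn_zero hS hj_zero)

lemma exists_abs_deriv_deriv_Rm_le (hS : 0 < S) (hj : ContDiff ℝ 2 j)
    (hj_one : ∀ t ≤ a, j t = 1) (hj_zero : ∀ t, b ≤ t → j t = 0) :
    ∃ K, ∀ x, |deriv (deriv (Rm j S)) x| ≤ K :=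
  exists_norm_le_of_eqOn_const ((contDiff_Rm hj).deriv'.continuous_deriv le_rfl)
    (by simpa using (deriv_Rm_eqOn_one hS hj_one).deriv isOpen_Iio)
    (by simpa using (deriv_Rm_eqOn_zero hS hj_zero).deriv isOpen_Ioi)

lemma abs_Rm_mul_le (hS : 0 < S) (hj_range : ∀ t, j t ∈ Set.Icc (0 : ℝ) 1)
    (hj_zero : ∀ t, b ≤ t → j t = 0) {x d C : ℝ} (hC : 0 ≤ C)
    (hd : x ≤ b * S → |x * d| ≤ C) : |Rm j S x * d| ≤ C := by
  rcases le_or_gt b (x / S) with hx | hx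
  · simpa [Rm, hj_zero _ hx] using hC
  · have hsq : j (x / S) ^ 2 ≤ 1 := pow_le_one₀ (hj_range _).1 (hj_range _).2
    calc |Rm j S x * d| = j (x / S) ^ 2 * |x * d| := by
          rw [Rm, mul_assoc, abs_mul, abs_of_nonneg (sq_nonneg _)]
      _ ≤ |x * d| := mul_le_of_le_one_left (abs_nonneg _) hsq
      _ ≤ C := hd ((div_lt_iff₀ hS).mp hx).le

end Rm

/-- the commutator `i[H₀, A₋]` is bounded by the graph norm of `H₀`,
uniformly in `λ ≥ 1`: there is `c > 0` with
`‖Γ¹R₋'Du − (i/2)Γ¹R₋''u − λR₋g'Γ²u − R₋f'u‖ ≤ c(‖H₀u‖ + ‖u‖)` for every Schwartz `u`. -/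
theorem commutator_H0_Aminus_bounded
    (Γ1 Γ2 : Matrix (Fin 4) (Fin 4) ℂ)
    (hΓ1_herm : Γ1.IsHermitian) (hΓ2_herm : Γ2.IsHermitian)
    (hΓ1_sq : Γ1 * Γ1 = 1) (hΓ2_sq : Γ2 * Γ2 = 1)
    (hanticomm : Γ1 * Γ2 + Γ2 * Γ1 = 0)
    (g : ℝ → ℝ) (hg_smooth : ContDiff ℝ (⊤ : ℕ∞) g) (Cb : ℝ) (hg_bdd : ∀ x : ℝ, |g x| ≤ Cb)
    (Cg : ℝ) (hCg : 0 < Cg) (hg' : ∀ x : ℝ, |deriv g x| ≤ Cg * |g x|)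
    (f : ℝ → ℝ) (hf_smooth : ContDiff ℝ (⊤ : ℕ∞) f)
    (Mf : ℝ) (hf_bdd : ∀ x : ℝ, |f x| ≤ Mf)
    (Mf' : ℝ) (hf'_bdd : ∀ x : ℝ, |deriv f x| ≤ Mf')
    (S : ℝ) (hS : 1 ≤ S)
    (jm : ℝ → ℝ) (hjm_smooth : ContDiff ℝ (⊤ : ℕ∞) jm)
    (hjm_range : ∀ t : ℝ, jm t ∈ Set.Icc (0 : ℝ) 1)
    (hjm_one : ∀ t : ℝ, t ≤ -2 → jm t = 1)
    (hjm_zero : ∀ t : ℝ, -(3 / 2 : ℝ) ≤ t → jm t = 0)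
    (C2 : ℝ) (hC2 : 0 < C2)
    (hxg' : ∀ x : ℝ, x ≤ -(3 / 2 : ℝ) → |x * deriv g x| ≤ C2 * |g x|)
    (C3 : ℝ) (hC3 : 0 < C3)
    (hxf' : ∀ x : ℝ, x ≤ -(3 / 2 : ℝ) → |x * deriv f x| ≤ C3) :
    ∃ c : ℝ, 0 < c ∧ ∀ (u : SchwartzMap ℝ V4) (lam : ℝ), 1 ≤ lam →
      L2norm (iCommH0Am Γ1 Γ2 g f lam jm S ⇑u) ≤
        c * (L2norm (H0op Γ1 Γ2 g f lam ⇑u) + L2norm ⇑u) := by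
  have hS₀ : 0 < S := one_pos.trans_le hS
  have hj : ContDiff ℝ 2 jm := contDiff_infty.mp hjm_smooth 2
  have hx {x : ℝ} (h : x ≤ -(3 / 2) * S) : x ≤ -(3 / 2) := by linarith
  obtain ⟨c, hc, hbound⟩ := commutator_H0_Aminus_bounded_general
    (isCliffordPair_Mop hΓ1_herm hΓ2_herm hΓ1_sq hΓ2_sq hanticomm)
    (hg_smooth.differentiable (by simp)) hg' (hf_smooth.differentiable (by simp)) hf_bdd
    (contDiff_Rm hj) (exists_abs_deriv_Rm_le hS₀ (hj.of_le one_le_two) hjm_one hjm_zero)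
    (exists_abs_deriv_deriv_Rm_le hS₀ hj hjm_one hjm_zero)
    (fun x => abs_Rm_mul_le hS₀ hjm_range hjm_zero (by positivity) fun h => hxg' x (hx h))
    (fun x => abs_Rm_mul_le hS₀ hjm_range hjm_zero hC3.le fun h => hxf' x (hx h))
  exact ⟨c, hc, fun u lam _ => (hbound lam u u.differentiable (u.memLp 2)
    ((SchwartzMap.derivCLM ℝ V4 u).memLp 2 volume)
    ((u.memLp 2).smul (memLp_top_of_bound hg_smooth.continuous.aestronglyMeasurable Cb
      (.of_forall hg_bdd)))).2⟩
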